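/- arXiv:1503.05761 — 8 statements merged into one kernel-verified Lean document; each statement's English description precedes it below -/
import Mathlib

section
/- The family of polynomials (X_i)_{0 ≤ i < 2^m} is a basis of the F-vector space of polynomials in F[X] of degree less than 2^m: the X_i are linearly independent over F and every polynomial of degree < 2^m is an F-linear combination of X_0, …, X_{2^m−1}. -/
open Polynomial Finset

/-- The GF(2)-linear span of `v 0, …, v (k-1)` as a `Finset`. -/
noncomputable def Vset {F : Type*} [Field F] (v : ℕ → F) (k : ℕ) : Finset F :=
  letI := Classical.decEq F
  (Finset.univ : Finset (Fin k → Bool)).image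
    (fun ε => ∑ j : Fin k, if ε j then v j else 0)

/-- The subspace polynomial `s_k(X) = ∏_{a ∈ V_k} (X - a)`. -/
noncomputable def sPoly {F : Type*} [Field F] (v : ℕ → F) (k : ℕ) : Polynomial F :=
  ∏ a ∈ Vset v k, (X - C a)

/-- The basis polynomial `X_i(X) = ∏_{j<m} s_j(X)^{i_j}`, where `i_j` is the
`j`-th binary digit of `i`. -/
noncomputable def XPoly {F : Type*} [Field F] (v : ℕ → F) (m i : ℕ) : Polynomial F :=
  ∏ j ∈ Finset.range m, (sPoly v j) ^ (Nat.testBit i j).toNat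

/-- The normalizing constant `p_i = ∏_{j<m} (s_j(v_j))^{i_j}`. -/
noncomputable def pCoef {F : Type*} [Field F] (v : ℕ → F) (m i : ℕ) : F :=
  ∏ j ∈ Finset.range m, ((sPoly v j).eval (v j)) ^ (Nat.testBit i j).toNat

/-- `v 0, …, v (m-1)` are linearly independent over the prime field GF(2). -/
def LinIndepGF2 {F : Type*} [Field F] (v : ℕ → F) (m : ℕ) : Prop :=
  ∀ ε : ℕ → Bool, (∑ j ∈ Finset.range m, if ε j then v j else 0) = 0 →
    ∀ j < m, ε j = false

theorem two_eq_zero_of_card {F : Type*} [Field F] [Fintype F] (m : ℕ)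
    (hcard : Fintype.card F = 2 ^ m) : (2 : F) = 0 := by
  have h := Nat.cast_card_eq_zero F
  rw [hcard] at h
  push_cast at h
  exact eq_zero_of_pow_eq_zero h

theorem Vset_card {F : Type*} [Field F] (h2 : (2 : F) = 0) (m : ℕ)
    (v : ℕ → F) (hv : LinIndepGF2 v m) (k : ℕ) (hk : k ≤ m) :
    (Vset v k).card = 2 ^ k := by
  letI := Classical.decEq F
  unfold Vset
  rw [Finset.card_image_of_injective]
  · simp
  · intro a b hab
    simp only at hab
    let δ : ℕ → Bool := fun j => if h : j < k then (a ⟨j, h⟩ ^^ b ⟨j, h⟩) else false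
    have hs : (∑ j ∈ Finset.range m, if δ j then v j else 0) = 0 := by
      have h1 : (∑ j ∈ Finset.range m, if δ j then v j else 0)
          = ∑ j ∈ Finset.range k, if δ j then v j else 0 := by
        symm
        apply Finset.sum_subset (Finset.range_mono hk)
        intro x _ hx
        have hx' : ¬ x < k := by simpa using hx
        simp [δ, hx']
      rw [h1, Finset.sum_range]
      have h3 : ∀ j : Fin k, (if δ j then v j else 0)
          = (if a j then v j else 0) + (if b j then v j else 0) := by
        intro j
        have hd : δ j = (a j ^^ b j) := by simp [δ]
        rw [hd]
        have := j.2
        cases a j <;> cases b j <;> simp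
        rw [← two_mul, h2, zero_mul]
      rw [Finset.sum_congr rfl (fun j _ => h3 j), Finset.sum_add_distrib, hab, ← two_mul, h2,
        zero_mul]
    funext j
    have h4 := hv δ hs j (j.2.trans_le hk)
    have hd : δ j = (a j ^^ b j) := by simp [δ]
    rw [hd] at h4
    simpa using h4

theorem sPoly_monic {F : Type*} [Field F] (v : ℕ → F) (k : ℕ) : (sPoly v k).Monic :=
  monic_prod_of_monic _ _ (fun a _ => monic_X_sub_C a)

theorem sPoly_natDegree {F : Type*} [Field F] (v : ℕ → F) (k : ℕ) :
    (sPoly v k).natDegree = (Vset v k).card := by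
  unfold sPoly
  rw [natDegree_prod_of_monic _ _ (fun a _ => monic_X_sub_C a)]
  simp

theorem sum_testBit (m i : ℕ) :
    ∑ j ∈ Finset.range m, (Nat.testBit i j).toNat * 2 ^ j = i % 2 ^ m := by
  induction m with
  | zero => simp [Nat.mod_one]
  | succ n ih => rw [Finset.sum_range_succ, ih, Nat.mod_pow_succ, Nat.toNat_testBit, mul_comm]

theorem XPoly_monic {F : Type*} [Field F] (v : ℕ → F) (m i : ℕ) : (XPoly v m i).Monic :=
  monic_prod_of_monic _ _ (fun j _ => (sPoly_monic v j).pow _)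

theorem XPoly_natDegree {F : Type*} [Field F] (h2 : (2 : F) = 0) (m : ℕ)
    (v : ℕ → F) (hv : LinIndepGF2 v m) (i : ℕ) (hi : i < 2 ^ m) :
    (XPoly v m i).natDegree = i := by
  unfold XPoly
  rw [natDegree_prod_of_monic _ _ (fun j _ => (sPoly_monic v j).pow _)]
  conv_rhs => rw [← Nat.mod_eq_of_lt hi, ← sum_testBit]
  apply Finset.sum_congr rfl
  intro j hj
  rw [(sPoly_monic v j).natDegree_pow, sPoly_natDegree,
    Vset_card h2 m v hv j (Finset.mem_range.mp hj).le]

/-- the family `(X_i)_{i < 2^m}` is a basis of the space of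
polynomials of degree `< 2^m`: linearly independent over `F`, and every
polynomial of degree `< 2^m` lies in its span. -/
theorem XPoly_basis {F : Type*} [Field F] [Fintype F] (m : ℕ) (hm : 1 ≤ m)
    (hcard : Fintype.card F = 2 ^ m) (v : ℕ → F) (hv : LinIndepGF2 v m) :
    LinearIndependent F (fun i : Fin (2 ^ m) => XPoly v m (i : ℕ)) ∧
    ∀ f : Polynomial F, f.degree < ((2 ^ m : ℕ) : WithBot ℕ) →
      f ∈ Submodule.span F (Set.range fun i : Fin (2 ^ m) => XPoly v m (i : ℕ)) := by
  have h2 := two_eq_zero_of_card m hcard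
  let S : Polynomial.Sequence F :=
    { elems' := fun i => if i < 2 ^ m then XPoly v m i else X ^ i
      degree_eq' := by
        intro i
        split_ifs with h
        · rw [degree_eq_natDegree (XPoly_monic v m i).ne_zero, XPoly_natDegree h2 m v hv i h]
        · simp }
  have hS : ∀ i, i < 2 ^ m → S i = XPoly v m i := fun i hi => if_pos hi
  constructor
  · have h := S.linearIndependent.comp (fun i : Fin (2 ^ m) => (i : ℕ)) Fin.val_injective
    have he : (fun i : Fin (2 ^ m) => XPoly v m (i : ℕ))
        = (S ∘ fun i : Fin (2 ^ m) => (i : ℕ)) := by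
      funext i
      exact (hS i i.2).symm
    rw [he]
    exact h
  · intro f hf
    have h := S.span_degreeLT (m := 2 ^ m) (fun i hi => by
      rw [hS i hi, (XPoly_monic v m i).leadingCoeff]; exact isUnit_one)
    have hm' := Polynomial.mem_degreeLT.mpr hf
    rw [← h] at hm'
    refine Submodule.span_mono ?_ hm'
    rintro _ ⟨i, hi, rfl⟩
    exact ⟨⟨i, hi⟩, (hS i hi).symm⟩
end

section
/- Let 1 ≤ k ≤ m and let d_0, …, d_{2^k−1} ∈ F. Define D(X) = Σ_{i=0}^{2^k−1} (d_i / p_i) · X_i(X). Then for every γ ∈ F and every a ∈ V_{k−1}: D(a + γ) = Σ_{i=0}^{2^{k−1}−1} ( d_i + (s_{k−1}(γ) / s_{k−1}(v_{k−1})) · d_{i+2^{k−1}} ) · (1/p_i) · X_i(a + γ). (Here s_{k−1}(v_{k−1}) ≠ 0 because v_{k−1} ∉ V_{k−1}.) -/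
open Polynomial Finset

theorem aux_add_mem {F : Type*} [Field F] (h2 : (2 : F) = 0) (v : ℕ → F) (k : ℕ) (a b : F)
    (ha : a ∈ Vset v k) (hb : b ∈ Vset v k) : a + b ∈ Vset v k := by
  classical
  simp only [Vset, Finset.mem_image, Finset.mem_univ, true_and] at ha hb ⊢
  obtain ⟨e, rfl⟩ := ha
  obtain ⟨f, rfl⟩ := hb
  refine ⟨fun j => xor (e j) (f j), ?_⟩
  rw [← Finset.sum_add_distrib]
  refine Finset.sum_congr rfl fun j _ => ?_
  cases he : e j <;> cases hf : f j <;> simp [he, hf]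
  rw [← two_mul, h2, zero_mul]

theorem aux_eval {F : Type*} [Field F] (h2 : (2 : F) = 0) (v : ℕ → F) (k : ℕ) (a γ : F)
    (ha : a ∈ Vset v k) : (sPoly v k).eval (a + γ) = (sPoly v k).eval γ := by
  have haa : a + a = 0 := by rw [← two_mul, h2, zero_mul]
  simp only [sPoly, eval_prod, eval_sub, eval_X, eval_C]
  refine Finset.prod_bij' (fun b _ => b + a) (fun b _ => b + a) ?_ ?_ ?_ ?_ ?_
  · intro b hb
    exact aux_add_mem h2 v k b a hb ha
  · intro b hb
    exact aux_add_mem h2 v k b a hb ha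
  · intro b _
    rw [add_assoc, haa, add_zero]
  · intro b _
    rw [add_assoc, haa, add_zero]
  · intro b _
    linear_combination haa

theorem aux_prod {M : Type*} [CommMonoid M] (f : ℕ → M) (m n i : ℕ) (hn : n < m)
    (hi : i < 2 ^ n) :
    ∏ j ∈ Finset.range m, f j ^ (Nat.testBit (i + 2 ^ n) j).toNat
      = f n * ∏ j ∈ Finset.range m, f j ^ (Nat.testBit i j).toNat := by
  have hmem : n ∈ Finset.range m := Finset.mem_range.2 hn
  rw [← Finset.mul_prod_erase _ _ hmem, ← Finset.mul_prod_erase _ _ hmem, add_comm i,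
    Nat.testBit_two_pow_add_eq, Nat.testBit_lt_two_pow hi]
  simp only [Bool.not_false, Bool.toNat_true, Bool.toNat_false, pow_one, pow_zero, one_mul]
  congr 1
  refine Finset.prod_congr rfl fun j hj => ?_
  have hne := Finset.ne_of_mem_erase hj
  rcases lt_or_gt_of_ne hne with h | h
  · rw [Nat.testBit_two_pow_add_gt h]
  · have h1 : 2 ^ (n + 1) ≤ 2 ^ j := Nat.pow_le_pow_right (by norm_num) h
    rw [pow_succ] at h1
    rw [Nat.testBit_lt_two_pow (by omega), Nat.testBit_lt_two_pow (by omega)]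

/-- the butterfly identity underlying the FFT: if
`D = Σ_{i < 2^k} (d_i / p_i) · X_i`, then for every `γ ∈ F` and `a ∈ V_(k-1)`,
`D(a+γ) = Σ_{i < 2^(k-1)} (d_i + (s_(k-1)(γ)/s_(k-1)(v_(k-1))) d_(i+2^(k-1))) (1/p_i) X_i(a+γ)`. -/
theorem fft_butterfly {F : Type*} [Field F] [Fintype F] (m : ℕ) (hm : 1 ≤ m)
    (hcard : Fintype.card F = 2 ^ m) (v : ℕ → F) (hv : LinIndepGF2 v m)
    (k : ℕ) (hk1 : 1 ≤ k) (hkm : k ≤ m) (d : ℕ → F)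
    (D : Polynomial F)
    (hD : D = ∑ i ∈ Finset.range (2 ^ k), C (d i / pCoef v m i) * XPoly v m i)
    (γ : F) (a : F) (ha : a ∈ Vset v (k - 1)) :
    D.eval (a + γ)
      = ∑ i ∈ Finset.range (2 ^ (k - 1)),
          (d i + (sPoly v (k - 1)).eval γ / (sPoly v (k - 1)).eval (v (k - 1))
              * d (i + 2 ^ (k - 1)))
            * (1 / pCoef v m i) * (XPoly v m i).eval (a + γ) := by
  have h2 : (2 : F) = 0 := by
    have h := Nat.cast_card_eq_zero F
    rw [hcard] at h
    push_cast at h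
    exact pow_eq_zero_iff (by omega) |>.1 h
  obtain ⟨n, rfl⟩ : ∃ n, k = n + 1 := ⟨k - 1, by omega⟩
  simp only [Nat.add_sub_cancel] at ha ⊢
  rw [hD, pow_succ, mul_two, Finset.sum_range_add, eval_add, eval_finsetSum, eval_finsetSum,
    ← Finset.sum_add_distrib]
  refine Finset.sum_congr rfl fun i hi => ?_
  have hi' := Finset.mem_range.1 hi
  have hX : XPoly v m (2 ^ n + i) = sPoly v n * XPoly v m i := by
    rw [add_comm]
    exact aux_prod (fun j => sPoly v j) m n i (by omega) hi'
  have hp : pCoef v m (2 ^ n + i) = (sPoly v n).eval (v n) * pCoef v m i := by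
    rw [add_comm]
    exact aux_prod (fun j => (sPoly v j).eval (v j)) m n i (by omega) hi'
  rw [hX, hp, add_comm (2 ^ n) i]
  simp only [eval_mul, eval_C, aux_eval h2 v n a γ ha, div_eq_mul_inv, mul_inv]
  ring
end

section
/- Let a, b ∈ F[X] with deg a > deg b ≥ 0 (in particular b ≠ 0), let Dℓ = ⌈log₂(deg a + 1)⌉ and assume Dℓ + 1 ≤ m. Set D_a = Dℓ + 1 and y = 2^{Dℓ} − deg b − 1, and let Q, r ∈ F[X] satisfy a = Q·b + r with deg r < deg b. Put A = a·X_y, B = b·X_y, R = r·X_y. Suppose Λ, H ∈ F[X] satisfy deg Λ = 2^{Dℓ} − 1, deg H ≤ 2^{Dℓ}, and Λ · s_1 · B = s_{D_a} + H. Then deg( Q·H + R·Λ·s_1 ) ≤ 2^{D_a} − 1. -/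
open Polynomial Finset

lemma sPoly_natDegree_le {F : Type*} [Field F] (v : ℕ → F) (k : ℕ) :
    (sPoly v k).natDegree ≤ 2 ^ k := by
  classical
  unfold sPoly
  refine (natDegree_prod_le _ _).trans ?_
  simp only [natDegree_X_sub_C, Finset.sum_const, smul_eq_mul, mul_one]
  unfold Vset
  refine Finset.card_image_le.trans ?_
  simp

lemma XPoly_natDegree_le {F : Type*} [Field F] (v : ℕ → F) (m i : ℕ) :
    (XPoly v m i).natDegree ≤ i := by
  have h : (XPoly v m i).natDegree ≤ i % 2 ^ m := by
    induction m with
    | zero => simp [XPoly]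
    | succ n ih =>
      have e : XPoly v (n + 1) i = XPoly v n i * (sPoly v n) ^ (Nat.testBit i n).toNat := by
        simp [XPoly, Finset.prod_range_succ]
      rw [e, Nat.mod_pow_succ, ← Nat.toNat_testBit]
      refine natDegree_mul_le.trans (Nat.add_le_add ih ?_)
      refine natDegree_pow_le.trans ?_
      rw [mul_comm]
      exact Nat.mul_le_mul_right _ (sPoly_natDegree_le v n)
  exact h.trans (Nat.mod_le _ _)

/-- degree bound in the fast division algorithm:
`deg(Q·H + R·Λ·s_1) ≤ 2^(D_a) - 1` where `D_a = Dℓ + 1`. -/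
theorem division_degree_bound {F : Type*} [Field F] [Fintype F] (m : ℕ) (hm : 1 ≤ m)
    (hcard : Fintype.card F = 2 ^ m) (v : ℕ → F) (hv : LinIndepGF2 v m)
    (a b : Polynomial F) (hb : 0 ≤ b.degree) (hab : b.degree < a.degree)
    (Dℓ : ℕ) (hD : Dℓ = Nat.clog 2 (a.natDegree + 1)) (hDm : Dℓ + 1 ≤ m)
    (y : ℕ) (hy : y = 2 ^ Dℓ - b.natDegree - 1)
    (Q r : Polynomial F) (hqr : a = Q * b + r) (hr : r.degree < b.degree)
    (Λ H : Polynomial F)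
    (hΛ : Λ.degree = ((2 ^ Dℓ - 1 : ℕ) : WithBot ℕ))
    (hH : H.degree ≤ ((2 ^ Dℓ : ℕ) : WithBot ℕ))
    (heq : Λ * sPoly v 1 * (b * XPoly v m y) = sPoly v (Dℓ + 1) + H) :
    (Q * H + (r * XPoly v m y) * Λ * sPoly v 1).degree
      ≤ ((2 ^ (Dℓ + 1) - 1 : ℕ) : WithBot ℕ) := by
  have hb0 : b ≠ 0 := by
    rintro rfl
    simp at hb
  have hlt : a.natDegree + 1 ≤ 2 ^ Dℓ := by
    rw [hD]; exact Nat.le_pow_clog (by norm_num) _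
  have hba : b.natDegree < a.natDegree := natDegree_lt_natDegree hb0 hab
  have hpow : 2 ^ (Dℓ + 1) = 2 * 2 ^ Dℓ := by ring
  refine (degree_add_le _ _).trans (max_le ?_ ?_)
  · apply degree_le_of_natDegree_le
    by_cases hQ : Q = 0
    · simp [hQ]
    have hQb : (Q * b).natDegree ≤ a.natDegree := by
      have e : Q * b = a - r := by rw [hqr]; ring
      rw [e]
      refine (natDegree_sub_le _ _).trans (max_le le_rfl ?_)
      exact natDegree_le_natDegree (hr.le.trans hab.le)
    rw [natDegree_mul hQ hb0] at hQb
    have hH' := natDegree_le_of_degree_le hH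
    have := natDegree_mul_le (p := Q) (q := H)
    omega
  · apply degree_le_of_natDegree_le
    by_cases hr0 : r = 0
    · simp [hr0]
    have hrb : r.natDegree < b.natDegree := natDegree_lt_natDegree hr0 hr
    have hΛ' := natDegree_le_of_degree_le hΛ.le
    have h1 := natDegree_mul_le (p := r * XPoly v m y * Λ) (q := sPoly v 1)
    have h2 := natDegree_mul_le (p := r * XPoly v m y) (q := Λ)
    have h3 := natDegree_mul_le (p := r) (q := XPoly v m y)
    have h4 := XPoly_natDegree_le v m y
    have h5 := sPoly_natDegree_le v 1
    omega
end

section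
/- Let a, b ∈ F[X] with deg a > deg b ≥ 0 (in particular b ≠ 0), let Dℓ = ⌈log₂(deg a + 1)⌉ and assume Dℓ + 1 ≤ m. Set D_a = Dℓ + 1 and y = 2^{Dℓ} − deg b − 1, and let Q, r ∈ F[X] satisfy a = Q·b + r with deg r < deg b. Put A = a·X_y, B = b·X_y. Suppose Λ, H ∈ F[X] satisfy deg Λ = 2^{Dℓ} − 1, deg H ≤ 2^{Dℓ}, and Λ · s_1 · B = s_{D_a} + H. Then Q is the quotient of A·Λ·s_1 on division by the monic polynomial s_{D_a}: A·Λ·s_1 = Q·s_{D_a} + ρ for some ρ ∈ F[X] with deg ρ < 2^{D_a}. -/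
open Polynomial Finset

theorem sPoly_degree_le {F : Type*} [Field F] (v : ℕ → F) (k : ℕ) :
    (sPoly v k).degree ≤ ((2 ^ k : ℕ) : WithBot ℕ) := by
  classical
  have hc : (Vset v k).card ≤ 2 ^ k := by
    unfold Vset
    refine Finset.card_image_le.trans ?_
    simp
  refine degree_le_of_natDegree_le ?_
  unfold sPoly
  rw [natDegree_prod_of_monic _ _ fun a _ => monic_X_sub_C a]
  simpa using hc

/-- the quotient extraction in the fast division algorithm:
`Q` is the quotient of `A·Λ·s_1` on division by the monic polynomial `s_(D_a)`. -/
theorem division_quotient {F : Type*} [Field F] [Fintype F] (m : ℕ) (hm : 1 ≤ m)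
    (hcard : Fintype.card F = 2 ^ m) (v : ℕ → F) (hv : LinIndepGF2 v m)
    (a b : Polynomial F) (hb : 0 ≤ b.degree) (hab : b.degree < a.degree)
    (Dℓ : ℕ) (hD : Dℓ = Nat.clog 2 (a.natDegree + 1)) (hDm : Dℓ + 1 ≤ m)
    (y : ℕ) (hy : y = 2 ^ Dℓ - b.natDegree - 1)
    (Q r : Polynomial F) (hqr : a = Q * b + r) (hr : r.degree < b.degree)
    (Λ H : Polynomial F)
    (hΛ : Λ.degree = ((2 ^ Dℓ - 1 : ℕ) : WithBot ℕ))
    (hH : H.degree ≤ ((2 ^ Dℓ : ℕ) : WithBot ℕ))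
    (heq : Λ * sPoly v 1 * (b * XPoly v m y) = sPoly v (Dℓ + 1) + H) :
    ∃ ρ : Polynomial F,
      (a * XPoly v m y) * Λ * sPoly v 1 = Q * sPoly v (Dℓ + 1) + ρ ∧
      ρ.degree < ((2 ^ (Dℓ + 1) : ℕ) : WithBot ℕ) := by
  have hb0 : b ≠ 0 := by
    rintro rfl
    simp at hb
  have hΛ0 : Λ ≠ 0 := by
    rintro rfl
    simp at hΛ
  have hpow : 2 ^ (Dℓ + 1) = 2 ^ Dℓ + 2 ^ Dℓ := by ring
  have hM0 : Λ * sPoly v 1 * XPoly v m y ≠ 0 :=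
    mul_ne_zero (mul_ne_zero hΛ0 (sPoly_monic v 1).ne_zero) (XPoly_monic v m y).ne_zero
  refine ⟨Q * H + r * (Λ * sPoly v 1 * XPoly v m y), ?_, ?_⟩
  · have h2 := congrArg (fun p => Q * p) heq
    rw [hqr]
    linear_combination h2
  · refine lt_of_le_of_lt (degree_add_le _ _) (max_lt ?_ ?_)
    · have hlt : a.natDegree + 1 ≤ 2 ^ Dℓ := by
        rw [hD]
        exact Nat.le_pow_clog (by norm_num) _
      have hQb : (Q * b).degree = a.degree := by
        have h3 : Q * b = a - r := by rw [hqr]; ring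
        rw [h3, degree_sub_eq_left_of_degree_lt (hr.trans hab)]
      have hQ : Q.degree ≤ (a.natDegree : WithBot ℕ) := by
        calc Q.degree ≤ (Q * b).degree := degree_le_mul_left Q hb0
          _ = a.degree := hQb
          _ ≤ _ := degree_le_natDegree
      calc (Q * H).degree ≤ Q.degree + H.degree := degree_mul_le _ _
        _ ≤ (a.natDegree : WithBot ℕ) + ((2 ^ Dℓ : ℕ) : WithBot ℕ) := add_le_add hQ hH
        _ = ((a.natDegree + 2 ^ Dℓ : ℕ) : WithBot ℕ) := by push_cast; rfl
        _ < _ := by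
          rw [Nat.cast_lt]
          omega
    · have h1 : (r * (Λ * sPoly v 1 * XPoly v m y)).degree
          < (b * (Λ * sPoly v 1 * XPoly v m y)).degree := by
        by_cases hr0 : r = 0
        · rw [hr0, zero_mul, degree_zero, bot_lt_iff_ne_bot]
          exact fun h => mul_ne_zero hb0 hM0 (degree_eq_bot.1 h)
        · rw [degree_eq_natDegree (mul_ne_zero hr0 hM0), degree_eq_natDegree (mul_ne_zero hb0 hM0),
            natDegree_mul hr0 hM0, natDegree_mul hb0 hM0, Nat.cast_lt]
          have := natDegree_lt_natDegree hr0 hr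
          omega
      refine h1.trans_le ?_
      have h4 : b * (Λ * sPoly v 1 * XPoly v m y) = sPoly v (Dℓ + 1) + H := by
        rw [← heq]; ring
      rw [h4]
      refine (degree_add_le _ _).trans (max_le (sPoly_degree_le v _) (hH.trans ?_))
      rw [Nat.cast_le]
      exact Nat.pow_le_pow_right (by norm_num) (Nat.le_succ _)
end

section
/- (Key equation) Let K be a finite field, E ⊆ K a subset, and u, r ∈ K[X] polynomials with u(a) = r(a) for every a ∈ K \ E. Let λ(X) = ∏_{a ∈ E} (X − a) be the error-locator polynomial. Then the polynomial ∏_{a ∈ K} (X − a) divides (u − r) · λ in K[X]. -/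
open Polynomial Finset

/-- key equation: for a finite field `K`, a subset `E ⊆ K`, and
polynomials `u, r` agreeing on `K \ E`, the polynomial `∏_{a ∈ K} (X - a)`
divides `(u - r)·λ` where `λ = ∏_{a ∈ E} (X - a)`. -/
theorem key_equation {K : Type*} [Field K] [Fintype K] (E : Finset K)
    (u r : Polynomial K) (h : ∀ a : K, a ∉ E → u.eval a = r.eval a) :
    (∏ a : K, (X - C a)) ∣ (u - r) * ∏ a ∈ E, (X - C a) := by
  apply Finset.prod_dvd_of_coprime
  · intro a _ b _ hab
    exact Polynomial.isCoprime_X_sub_C_of_isUnit_sub (sub_ne_zero.mpr hab).isUnit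
  · intro a _
    by_cases ha : a ∈ E
    · exact Dvd.dvd.mul_left (Finset.dvd_prod_of_mem (fun a => X - C a) ha) _
    · apply Dvd.dvd.mul_right
      rw [Polynomial.dvd_iff_isRoot, Polynomial.IsRoot, Polynomial.eval_sub, h a ha, sub_self]
end

section
/- (Error-value formula) Let K be a finite field of characteristic 2, E ⊆ K a subset, and λ(X) = ∏_{a ∈ E} (X − a). Suppose u, r, q ∈ K[X] satisfy (u + r) · λ = q · ∏_{a ∈ K} (X − a). Then for every a ∈ E, the formal derivative λ′ satisfies λ′(a) ≠ 0 and (u(a) + r(a)) · λ′(a) = q(a); equivalently, u(a) + r(a) = q(a) / λ′(a). -/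
open Polynomial Finset

/-- error-value formula: in characteristic 2, if
`(u + r)·λ = q·∏_{a ∈ K}(X - a)` with `λ = ∏_{a ∈ E}(X - a)`, then for `a ∈ E`
we have `λ'(a) ≠ 0`, `(u(a)+r(a))·λ'(a) = q(a)`, and `u(a)+r(a) = q(a)/λ'(a)`. -/
theorem error_value_formula {K : Type*} [Field K] [Fintype K] [CharP K 2]
    (E : Finset K) (u r q : Polynomial K)
    (heq : (u + r) * (∏ a ∈ E, (X - C a)) = q * ∏ a : K, (X - C a)) :
    ∀ a ∈ E,
      (Polynomial.derivative (∏ b ∈ E, (X - C b))).eval a ≠ 0 ∧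
      (u.eval a + r.eval a) * (Polynomial.derivative (∏ b ∈ E, (X - C b))).eval a
        = q.eval a ∧
      u.eval a + r.eval a
        = q.eval a / (Polynomial.derivative (∏ b ∈ E, (X - C b))).eval a := by
  classical
  intro a ha
  have hE : (∏ b ∈ E, (X - C b)) = (X - C a) * ∏ b ∈ E.erase a, (X - C b) :=
    (Finset.mul_prod_erase E (fun b => (X - C b)) ha).symm
  have hne : (Polynomial.derivative (∏ b ∈ E, (X - C b))).eval a ≠ 0 := by
    rw [hE]
    simp only [derivative_mul, derivative_X_sub_C, eval_add, eval_mul, eval_sub, eval_X, eval_C,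
      sub_self, zero_mul, add_zero, one_mul, eval_prod]
    rw [Finset.prod_ne_zero_iff]
    intro b hb
    exact sub_ne_zero.mpr (Finset.ne_of_mem_erase hb).symm
  have hK : (∏ b : K, (X - C b)) = X ^ Fintype.card K - X := by
    have hm : (X ^ Fintype.card K - X : K[X]).Monic := by
      apply monic_X_pow_sub
      rw [degree_X]
      exact_mod_cast Fintype.one_lt_card
    have h2 := prod_multiset_X_sub_C_of_monic_of_roots_card_eq hm (by
      rw [FiniteField.roots_X_pow_card_sub_X,
        FiniteField.X_pow_card_sub_X_natDegree_eq K Fintype.one_lt_card]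
      rfl)
    rw [FiniteField.roots_X_pow_card_sub_X] at h2
    exact h2
  have hE0 : (∏ b ∈ E, (X - C b)).eval a = 0 := by
    rw [hE]; simp
  have h := congrArg (fun p => (Polynomial.derivative p).eval a) heq
  simp only [hK, derivative_mul, eval_add, eval_mul, hE0] at h
  have h1 : (u.eval a + r.eval a) * (Polynomial.derivative (∏ b ∈ E, (X - C b))).eval a
        = q.eval a := by
    simpa [derivative_X_pow, FiniteField.pow_card, FiniteField.cast_card_eq_zero, CharTwo.neg_eq] using h
  exact ⟨hne, h1, by rw [eq_div_iff hne]; exact h1⟩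
end

section
/- (Degree bound for the syndrome key equation) Let 1 ≤ t < m, set T = 2^t and k = 2^m − 2^t. Let u, r₀, σ, λ, q ∈ F[X] satisfy: deg u < k, deg r₀ < k, λ ≠ 0, deg λ ≤ T/2, deg q < deg λ, and u · λ = (r₀ + X_k · σ) · λ + q · s_m. Then deg( σ·λ + q·s_t ) ≤ T/2. -/
open Polynomial Finset

theorem mem_Vset_iff {F : Type*} [Field F] (v : ℕ → F) (k : ℕ) (a : F) :
    a ∈ Vset v k ↔ ∃ ε : ℕ → Bool, (∑ j ∈ Finset.range k, if ε j then v j else 0) = a := by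
  classical
  unfold Vset
  simp only [Finset.mem_image, Finset.mem_univ, true_and]
  constructor
  · rintro ⟨ε, rfl⟩
    refine ⟨fun j => if h : j < k then ε ⟨j, h⟩ else false, ?_⟩
    rw [Finset.sum_range]
    refine Finset.sum_congr rfl fun j _ => ?_
    simp
  · rintro ⟨ε, rfl⟩
    exact ⟨fun j => ε j, by rw [Finset.sum_range]⟩

theorem Vset_zero {F : Type*} [Field F] (v : ℕ → F) : Vset v 0 = {0} := by
  ext a
  rw [mem_Vset_iff]
  simp only [Finset.range_zero, Finset.sum_empty, exists_const, Finset.mem_singleton]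
  exact eq_comm

open Classical in
theorem Vset_succ {F : Type*} [Field F] (v : ℕ → F) (k : ℕ) :
    Vset v (k + 1) = Vset v k ∪ (Vset v k).image (fun a => a + v k) := by
  ext a
  simp only [Finset.mem_union, Finset.mem_image, mem_Vset_iff]
  constructor
  · rintro ⟨ε, rfl⟩
    rw [Finset.sum_range_succ]
    by_cases h : ε k = true
    · right
      exact ⟨_, ⟨ε, rfl⟩, by simp [h]⟩
    · left
      exact ⟨ε, by simp [h]⟩
  · have key : ∀ (ε : ℕ → Bool) (b : Bool), (∑ j ∈ Finset.range (k+1),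
        if (Function.update ε k b) j then v j else 0) =
        (∑ j ∈ Finset.range k, if ε j then v j else 0) + if b then v k else 0 := by
      intro ε b
      rw [Finset.sum_range_succ]
      congr 1
      · refine Finset.sum_congr rfl fun j hj => ?_
        rw [Function.update_of_ne (Finset.mem_range.1 hj).ne]
      · simp
    rintro (⟨ε, rfl⟩ | ⟨_, ⟨ε, rfl⟩, rfl⟩)
    · exact ⟨Function.update ε k false, by rw [key]; simp⟩
    · exact ⟨Function.update ε k true, by rw [key]; simp⟩

open Classical in
theorem Vset_disj {F : Type*} [Field F] (h2 : (2 : F) = 0) (v : ℕ → F) (m k : ℕ) (hk : k < m)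
    (hv : LinIndepGF2 v m) :
    Disjoint (Vset v k) ((Vset v k).image (fun a => a + v k)) := by
  rw [Finset.disjoint_left]
  intro a ha hb
  simp only [Finset.mem_image, mem_Vset_iff] at ha hb
  obtain ⟨ε, rfl⟩ := ha
  obtain ⟨_, ⟨ε', rfl⟩, h⟩ := hb
  have := hv (fun j => if j < k then xor (ε j) (ε' j) else decide (j = k)) ?_ k hk
  · simp at this
  · have hsub : Finset.range (k+1) ⊆ Finset.range m := by
      intro j; simp only [Finset.mem_range]; omega
    rw [← Finset.sum_subset hsub]
    · rw [Finset.sum_range_succ]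
      have e : (∑ j ∈ Finset.range k, if (if j < k then xor (ε j) (ε' j) else decide (j = k)) = true
          then v j else 0) = (∑ j ∈ Finset.range k, if ε j then v j else 0) +
            (∑ j ∈ Finset.range k, if ε' j then v j else 0) := by
        rw [← Finset.sum_add_distrib]
        refine Finset.sum_congr rfl fun j hj => ?_
        rw [if_pos (Finset.mem_range.1 hj)]
        cases ε j <;> cases ε' j <;> simp
        linear_combination (-v j) * h2
      simp only [e]
      rw [← h]
      simp only [lt_irrefl, if_false, decide_true, if_true]
      linear_combination ((∑ j ∈ Finset.range k, if ε' j then v j else 0) + v k) * h2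
    · intro j _ hj
      simp only [Finset.mem_range] at hj
      have h3 : ¬ j < k := by omega
      have h4 : j ≠ k := by omega
      simp [h3, h4]

theorem sPoly_succ_comp {F : Type*} [Field F] (h2 : (2 : F) = 0) (v : ℕ → F) (m k : ℕ) (hk : k < m)
    (hv : LinIndepGF2 v m) :
    sPoly v (k+1) = sPoly v k * (sPoly v k).comp (X + C (- v k)) := by
  classical
  unfold sPoly
  rw [Vset_succ, Finset.prod_union (Vset_disj h2 v m k hk hv), Finset.prod_image (by
    intro a _ b _ h; simpa using h), Polynomial.prod_comp]
  congr 1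
  refine Finset.prod_congr rfl fun a _ => ?_
  simp
  ring

theorem sPoly_affine {F : Type*} [Field F] (h2 : (2 : F) = 0) (v : ℕ → F) (m k : ℕ) (hk : k ≤ m)
    (hv : LinIndepGF2 v m) : ∀ a : F, ∃ b : F,
    (sPoly v k).comp (X + C a) = sPoly v k + C b := by
  induction k with
  | zero => intro a; exact ⟨a, by simp [sPoly, Vset_zero]⟩
  | succ k ih =>
    intro a
    have ih := ih (by omega)
    obtain ⟨c, hc⟩ := ih a
    obtain ⟨d, hd⟩ := ih (- v k)
    rw [sPoly_succ_comp h2 v m k hk hv, hd]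
    refine ⟨c * c + c * d, ?_⟩
    simp only [mul_comp, add_comp, C_comp, hc, C_add, C_mul]
    have h2' : (2 : F[X]) = 0 := by
      have := congrArg (C : F → F[X]) h2
      rwa [C_0, C_ofNat] at this
    linear_combination (sPoly v k * C c) * h2'

theorem sPoly_succ {F : Type*} [Field F] (h2 : (2 : F) = 0) (v : ℕ → F) (m k : ℕ) (hk : k < m)
    (hv : LinIndepGF2 v m) : ∃ b : F, sPoly v (k+1) = sPoly v k * (sPoly v k + C b) := by
  obtain ⟨b, hb⟩ := sPoly_affine h2 v m k hk.le hv (- v k)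
  exact ⟨b, by rw [sPoly_succ_comp h2 v m k hk hv, hb]⟩

theorem sPoly_degree {F : Type*} [Field F] (h2 : (2 : F) = 0) (v : ℕ → F) (m k : ℕ) (hk : k ≤ m)
    (hv : LinIndepGF2 v m) : (sPoly v k).natDegree = 2 ^ k := by
  induction k with
  | zero => simp [sPoly, Vset_zero]
  | succ k ih =>
    have ih := ih (by omega)
    rw [sPoly_succ_comp h2 v m k hk hv]
    have hne : sPoly v k ≠ 0 := by
      intro h; rw [h] at ih; simp at ih
      exact absurd ih (by positivity)
    have hc : ((sPoly v k).comp (X + C (- v k))).natDegree = 2 ^ k := by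
      rw [natDegree_comp, natDegree_X_add_C, ih, mul_one]
    have hne' : (sPoly v k).comp (X + C (- v k)) ≠ 0 := by
      intro h; rw [h] at hc; simp at hc
      exact absurd hc (by positivity)
    rw [natDegree_mul hne hne', hc, ih, pow_succ]; ring

theorem sPoly_ne {F : Type*} [Field F] (v : ℕ → F) (k : ℕ) : sPoly v k ≠ 0 :=
  Finset.prod_ne_zero_iff.2 fun a _ => X_sub_C_ne_zero a

theorem XPoly_eq {F : Type*} [Field F] (v : ℕ → F) (m t : ℕ) (htm : t < m) :
    XPoly v m (2 ^ m - 2 ^ t) = ∏ l ∈ Finset.Ico t m, sPoly v l := by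
  unfold XPoly
  have hsub : Finset.Ico t m ⊆ Finset.range m := by
    intro j; simp only [Finset.mem_range, Finset.mem_Ico]; omega
  have hlt : 2 ^ t < 2 ^ m := Nat.pow_lt_pow_right (by norm_num) htm
  have hp : 0 < 2 ^ t := by positivity
  have hb : ∀ j, Nat.testBit (2 ^ m - 2 ^ t) j = (decide (j < m) && !decide (j < t)) := by
    intro j
    have := Nat.testBit_two_pow_sub_succ (x := 2 ^ t - 1) (n := m) (by omega) j
    rw [Nat.testBit_two_pow_sub_one, Nat.sub_add_cancel hp] at this
    exact this
  rw [← Finset.prod_subset hsub]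
  · refine Finset.prod_congr rfl fun j hj => ?_
    rw [Finset.mem_Ico] at hj
    simp [hb, hj.2, not_lt.2 hj.1]
  · intro j h1 h3
    simp only [Finset.mem_range, Finset.mem_Ico] at h1 h3
    have : j < t := by omega
    simp [hb, this]

theorem prod_degree {F : Type*} [Field F] (h2 : (2 : F) = 0) (v : ℕ → F) (m t n : ℕ) (htn : t ≤ n)
    (hn : n ≤ m) (hv : LinIndepGF2 v m) :
    (∏ l ∈ Finset.Ico t n, sPoly v l).natDegree + 2 ^ t = 2 ^ n := by
  induction n, htn using Nat.le_induction with
  | base => simp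
  | succ n htn ih =>
    have ih := ih (by omega)
    rw [Finset.prod_Ico_succ_top htn, natDegree_mul (Finset.prod_ne_zero_iff.2 fun a _ => sPoly_ne v a)
      (sPoly_ne v n), sPoly_degree h2 v m n (by omega) hv, pow_succ]
    omega

theorem diff_degree {F : Type*} [Field F] (h2 : (2 : F) = 0) (v : ℕ → F) (m t n : ℕ) (htn : t ≤ n)
    (hn : n ≤ m) (hv : LinIndepGF2 v m) :
    ((∏ l ∈ Finset.Ico t n, sPoly v l) * sPoly v t - sPoly v n).natDegree ≤ 2 ^ n - 2 ^ t := by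
  induction n, htn using Nat.le_induction with
  | base => simp
  | succ n htn ih =>
    have ih := ih (by omega)
    obtain ⟨b, hb⟩ := sPoly_succ h2 v m n hn hv
    have e : (∏ l ∈ Finset.Ico t (n+1), sPoly v l) * sPoly v t - sPoly v (n+1) =
        sPoly v n * (((∏ l ∈ Finset.Ico t n, sPoly v l) * sPoly v t - sPoly v n) - C b) := by
      rw [Finset.prod_Ico_succ_top htn, hb]; ring
    have hle : 2 ^ t ≤ 2 ^ n := Nat.pow_le_pow_right (by norm_num) htn
    rw [e]
    refine natDegree_mul_le.trans ?_
    rw [sPoly_degree h2 v m n (by omega) hv, natDegree_sub_C, pow_succ]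
    omega

/-- degree bound for the syndrome key equation: with `T = 2^t`,
`k = 2^m - 2^t`, if `u·λ = (r₀ + X_k·σ)·λ + q·s_m` with the stated degree
bounds, then `deg(σ·λ + q·s_t) ≤ T/2`. -/
theorem syndrome_key_equation {F : Type*} [Field F] [Fintype F] (m : ℕ) (hm : 1 ≤ m)
    (hcard : Fintype.card F = 2 ^ m) (v : ℕ → F) (hv : LinIndepGF2 v m)
    (t : ℕ) (ht1 : 1 ≤ t) (htm : t < m)
    (u r₀ σ lam q : Polynomial F)
    (hu : u.degree < ((2 ^ m - 2 ^ t : ℕ) : WithBot ℕ))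
    (hr₀ : r₀.degree < ((2 ^ m - 2 ^ t : ℕ) : WithBot ℕ))
    (hlam : lam ≠ 0)
    (hlamdeg : lam.degree ≤ ((2 ^ t / 2 : ℕ) : WithBot ℕ))
    (hq : q.degree < lam.degree)
    (heq : u * lam = (r₀ + XPoly v m (2 ^ m - 2 ^ t) * σ) * lam + q * sPoly v m) :
    (σ * lam + q * sPoly v t).degree ≤ ((2 ^ t / 2 : ℕ) : WithBot ℕ) := by
  have h2 : (2 : F) = 0 := by
    have h : ((Fintype.card F : ℕ) : F) = 0 := Nat.cast_card_eq_zero F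
    rw [hcard] at h
    push_cast at h
    exact pow_eq_zero_iff (by omega) |>.1 h
  have hP := prod_degree h2 v m t m htm.le le_rfl hv
  have hD := diff_degree h2 v m t m htm.le le_rfl hv
  rw [XPoly_eq v m t htm] at heq
  have hP0 : (∏ l ∈ Finset.Ico t m, sPoly v l) ≠ 0 :=
    Finset.prod_ne_zero_iff.2 fun a _ => sPoly_ne v a
  generalize (∏ l ∈ Finset.Ico t m, sPoly v l) = P at *
  have e : P * (σ * lam + q * sPoly v t) = (u - r₀) * lam + q * (P * sPoly v t - sPoly v m) := by
    linear_combination -heq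
  by_cases h0 : σ * lam + q * sPoly v t = 0
  · rw [h0]; simp
  have hk : 2 ^ m - 2 ^ t = P.natDegree := by omega
  rw [hk] at hu hr₀ hD
  have hl : lam.natDegree ≤ 2 ^ t / 2 := natDegree_le_of_degree_le hlamdeg
  have hqn : q.natDegree ≤ 2 ^ t / 2 := natDegree_le_of_degree_le (hq.le.trans hlamdeg)
  have hur : (u - r₀).natDegree ≤ P.natDegree :=
    natDegree_le_of_degree_le ((degree_sub_le _ _).trans (max_le hu.le hr₀.le))
  have hd : (P * (σ * lam + q * sPoly v t)).natDegree ≤ P.natDegree + 2 ^ t / 2 := by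
    rw [e]
    refine (natDegree_add_le _ _).trans (max_le ?_ ?_)
    · exact natDegree_mul_le.trans (by omega)
    · exact natDegree_mul_le.trans (by omega)
  rw [natDegree_mul hP0 h0] at hd
  exact degree_le_of_natDegree_le (by omega)
end

section
/- (Coset-interpolant identity underlying systematic encoding) Let 1 ≤ t < m and T = 2^t, and let f ∈ F[X] with deg f < 2^m − T. For each coset C of the additive subgroup V_t in F (there are 2^{m−t} such cosets, each of size T), let g_C ∈ F[X] be the unique polynomial of degree < T with g_C(c) = f(c) for all c ∈ C (the Lagrange interpolant of f on C). Then Σ_C g_C = 0, the sum running over all cosets of V_t in F. -/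
open Polynomial Finset

theorem aux_sum_if {F : Type*} [Field F] [CharP F 2] (v : ℕ → F) (k : ℕ) (a b : Fin k → Bool) :
    (∑ j : Fin k, if a j then v j else 0) - (∑ j : Fin k, if b j then v j else 0)
      = ∑ j : Fin k, if (xor (a j) (b j)) then v j else 0 := by
  rw [← Finset.sum_sub_distrib]
  refine Finset.sum_congr rfl fun j _ => ?_
  cases a j <;> cases b j <;> simp [CharTwo.neg_eq]

theorem aux_mem {F : Type*} [Field F] (v : ℕ → F) (k : ℕ) (x : F) :
    x ∈ Vset v k ↔ ∃ ε : Fin k → Bool, (∑ j : Fin k, if ε j then v j else 0) = x := by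
  classical
  simp [Vset]

theorem aux_sub_mem {F : Type*} [Field F] [CharP F 2] (v : ℕ → F) (k : ℕ) (x y : F)
    (hx : x ∈ Vset v k) (hy : y ∈ Vset v k) : x - y ∈ Vset v k := by
  rw [aux_mem] at *
  obtain ⟨a, rfl⟩ := hx
  obtain ⟨b, rfl⟩ := hy
  exact ⟨fun j => xor (a j) (b j), (aux_sum_if v k a b).symm⟩

theorem aux_card {F : Type*} [Field F] [CharP F 2] (v : ℕ → F) (m t : ℕ) (htm : t < m)
    (hv : LinIndepGF2 v m) : (Vset v t).card = 2 ^ t := by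
  classical
  unfold Vset
  rw [Finset.card_image_of_injective]
  · simp
  · intro a b hab
    have h0 := aux_sum_if v t a b
    have hab' : (∑ j : Fin t, if a j then v j else 0) = (∑ j : Fin t, if b j then v j else 0) := hab
    rw [hab', sub_self] at h0
    have h1 := hv (fun j => if h : j < t then xor (a ⟨j, h⟩) (b ⟨j, h⟩) else false) (by
      rw [← Finset.sum_subset (Finset.range_subset_range.2 htm.le)]
      · rw [← Fin.sum_univ_eq_sum_range (fun j => if (if h : j < t then
            xor (a ⟨j, h⟩) (b ⟨j, h⟩) else false) = true then v j else 0) t]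
        refine Eq.trans ?_ h0.symm
        refine Finset.sum_congr rfl fun j _ => ?_
        simp
      · intro x _ hx
        have : ¬ x < t := by simpa using hx
        simp [this])
    funext j
    have h2 := h1 j (j.2.trans htm)
    simpa using h2

theorem aux_sum_zero {F : Type*} [Field F] [Fintype F] (p : Polynomial F)
    (hp : p.natDegree < Fintype.card F - 1) : ∑ x : F, p.eval x = 0 := by
  simp_rw [Polynomial.eval_eq_sum_range]
  rw [Finset.sum_comm]
  refine Finset.sum_eq_zero fun i hi => ?_
  rw [← Finset.mul_sum, FiniteField.sum_pow_lt_card_sub_one, mul_zero]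
  have := Finset.mem_range.1 hi
  omega

/-- coset-interpolant identity: let `T = 2^t`, `deg f < 2^m - T`,
let `B` be a set of representatives of the cosets of `V_t` in `F`, and for each
`β ∈ B` let `g β` be the interpolant of `f` on the coset `V_t + β` (degree `< T`,
agreeing with `f` on the coset). Then `Σ_{β ∈ B} g β = 0`. -/
theorem coset_interpolant_sum {F : Type*} [Field F] [Fintype F] (m : ℕ) (hm : 1 ≤ m)
    (hcard : Fintype.card F = 2 ^ m) (v : ℕ → F) (hv : LinIndepGF2 v m)
    (t : ℕ) (ht1 : 1 ≤ t) (htm : t < m)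
    (f : Polynomial F) (hf : f.degree < ((2 ^ m - 2 ^ t : ℕ) : WithBot ℕ))
    (B : Finset F)
    (hrep : ∀ x : F, ∃! β, β ∈ B ∧ x - β ∈ Vset v t)
    (g : F → Polynomial F)
    (hgdeg : ∀ β ∈ B, (g β).degree < ((2 ^ t : ℕ) : WithBot ℕ))
    (hgval : ∀ β ∈ B, ∀ a ∈ Vset v t, (g β).eval (a + β) = f.eval (a + β)) :
    ∑ β ∈ B, g β = 0 := by
  classical
  have hchar : CharP F 2 := by
    have : Fact (Nat.Prime 2) := ⟨Nat.prime_two⟩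
    exact charP_of_card_eq_prime_pow (f := m) hcard
  set V := Vset v t with hV
  have hVc : V.card = 2 ^ t := aux_card v m t htm hv
  have hsub : ∀ x ∈ V, ∀ y ∈ V, x - y ∈ V := fun x hx y hy => aux_sub_mem v t x y hx hy
  have h0 : (0 : F) ∈ V := by
    obtain ⟨x, hx⟩ : V.Nonempty := Finset.card_pos.1 (by rw [hVc]; positivity)
    simpa using hsub x hx x hx
  have hpow : 2 ^ t < 2 ^ m := Nat.pow_lt_pow_right (by norm_num) htm
  have hTpos : 0 < 2 ^ t := by positivity
  obtain ⟨P, hPdeg, hP0, hPV⟩ : ∃ P : Polynomial F, P.natDegree ≤ 2 ^ t - 1 ∧ P.eval 0 = 1 ∧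
      ∀ a ∈ V, a ≠ 0 → P.eval a = 0 := by
    set Q : Polynomial F := ∏ a ∈ V.erase 0, (X - C a) with hQ
    have hQ0 : Q.eval 0 ≠ 0 := by
      rw [hQ, Polynomial.eval_prod, Finset.prod_ne_zero_iff]
      intro a ha
      simpa using Finset.ne_of_mem_erase ha
    refine ⟨C (Q.eval 0)⁻¹ * Q, ?_, ?_, ?_⟩
    · refine (Polynomial.natDegree_C_mul_le _ _).trans ?_
      rw [hQ, Polynomial.natDegree_finsetProd_X_sub_C_eq_card, Finset.card_erase_of_mem h0, hVc]
    · rw [Polynomial.eval_mul, Polynomial.eval_C, inv_mul_cancel₀ hQ0]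
    · intro a ha hne
      have hQa : Q.eval a = 0 := by
        rw [hQ, Polynomial.eval_prod]
        exact Finset.prod_eq_zero (Finset.mem_erase.2 ⟨hne, ha⟩) (by simp)
      rw [Polynomial.eval_mul, hQa, mul_zero]
  have hcompdeg : ∀ c : F, (P.comp (X - C c)).natDegree ≤ 2 ^ t - 1 := by
    intro c
    refine Polynomial.natDegree_comp_le.trans ?_
    simpa using hPdeg
  have hterm : ∀ c d : F, (C d * P.comp (X - C c)).degree < ((2 ^ t : ℕ) : WithBot ℕ) := by
    intro c d
    refine lt_of_le_of_lt Polynomial.degree_le_natDegree ?_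
    rw [Nat.cast_lt]
    have := (Polynomial.natDegree_C_mul_le d (P.comp (X - C c))).trans (hcompdeg c)
    omega
  have hg : ∀ β ∈ B, g β = ∑ a ∈ V, C (f.eval (a + β)) * P.comp (X - C (a + β)) := by
    intro β hβ
    refine Polynomial.eq_of_degrees_lt_of_eval_finset_eq (V.image (fun a => a + β)) ?_ ?_ ?_
    · rw [Finset.card_image_of_injective _ (add_left_injective β), hVc]
      exact hgdeg β hβ
    · rw [Finset.card_image_of_injective _ (add_left_injective β), hVc]
      exact (Polynomial.degree_sum_le _ _).trans_lt
        ((Finset.sup_lt_iff (WithBot.bot_lt_coe _)).2 fun a _ => hterm _ _)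
    · intro x hx
      obtain ⟨b, hb, rfl⟩ := Finset.mem_image.1 hx
      rw [hgval β hβ b hb, Polynomial.eval_finsetSum, Finset.sum_eq_single b]
      · simp [hP0]
      · intro a ha hab
        have := hPV (b - a) (hsub b hb a ha) (sub_ne_zero.2 hab.symm)
        simp [this]
      · intro h
        exact absurd hb h
  have hsum : ∑ β ∈ B, g β = ∑ x : F, C (f.eval x) * P.comp (X - C x) := by
    rw [Finset.sum_congr rfl hg, ← Finset.sum_product']
    refine Finset.sum_bij (fun p _ => p.2 + p.1) (fun _ _ => Finset.mem_univ _) ?_ ?_ ?_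
    · rintro ⟨β, a⟩ h ⟨β', a'⟩ h' heq
      simp only [Finset.mem_product] at h h' heq
      obtain ⟨γ, _, hγ⟩ := hrep (a + β)
      have e1 := hγ β ⟨h.1, by simpa using h.2⟩
      have e2 := hγ β' ⟨h'.1, by rw [heq]; simpa using h'.2⟩
      have e : β = β' := e1.trans e2.symm
      subst e
      have := add_right_cancel heq
      rw [this]
    · intro x _
      obtain ⟨β, ⟨hβ, hx⟩, _⟩ := hrep x
      exact ⟨(β, x - β), Finset.mem_product.2 ⟨hβ, hx⟩, by simp⟩
    · intro p _
      rfl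
  have hfdeg : f.natDegree < 2 ^ m - 2 ^ t := by
    by_cases hf0 : f = 0
    · subst hf0
      simpa using hpow
    · exact (Polynomial.natDegree_lt_iff_degree_lt hf0).2 hf
  rw [hsum]
  refine Polynomial.eq_zero_of_degree_lt_of_eval_finset_eq_zero (Finset.univ : Finset F) ?_ ?_
  · rw [Finset.card_univ, hcard]
    refine (Polynomial.degree_sum_le _ _).trans_lt
        ((Finset.sup_lt_iff (WithBot.bot_lt_coe _)).2 fun a _ => (hterm _ _).trans ?_)
    exact Nat.cast_lt.2 hpow
  · intro y _
    have := aux_sum_zero (f * P.comp (C y - X)) (by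
      refine lt_of_le_of_lt Polynomial.natDegree_mul_le ?_
      have h1 : (P.comp (C y - X)).natDegree ≤ 2 ^ t - 1 := by
        refine Polynomial.natDegree_comp_le.trans ?_
        have h2 : (C y - X : Polynomial F).natDegree ≤ 1 :=
          (Polynomial.natDegree_sub_le _ _).trans (by simp)
        exact (Nat.mul_le_mul hPdeg h2).trans (by simp)
      rw [hcard]
      omega)
    rw [Polynomial.eval_finsetSum]
    simpa using this
end
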